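/- arXiv:1610.06760 — 2 statements merged into one kernel-verified Lean document; each statement's English description precedes it below -/
import Mathlib

section
/- Let f(z) = z + Σ_{n≥2} a_n zⁿ be a typically real function on the open unit disc 𝔻 and let λ be a real number with λ ≥ 1. Then |λ a_2² − a_3| ≤ 3 when 1 ≤ λ ≤ 3/2, and |λ a_2² − a_3| ≤ 4λ − 3 when λ ≥ 3/2. -/
open Real in
lemma zal_int_cos (m : ℝ) (hm : m ≠ 0) (hs : sin (m * π) = 0) :
    ∫ x in (0:ℝ)..π, cos (m * x) = 0 := by
  rw [intervalIntegral.integral_comp_mul_left (fun x => cos x) hm]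
  simp [hs]

open Real in
lemma zal_orth (n k : ℕ) (hk : 1 ≤ k) :
    ∫ x in (0:ℝ)..π, sin (n * x) * sin (k * x) = if n = k then π / 2 else 0 := by
  have h1 : ∀ x : ℝ, sin (n * x) * sin (k * x)
      = (cos (((n:ℝ) - k) * x) - cos (((n:ℝ) + k) * x)) * (1 / 2) := by
    intro x
    rw [sub_mul (n:ℝ), add_mul (n:ℝ), cos_sub, cos_add]; ring
  simp_rw [h1]
  rw [intervalIntegral.integral_mul_const, intervalIntegral.integral_sub]
  rotate_left
  · exact (by fun_prop : Continuous fun x : ℝ => cos (((n:ℝ) - k) * x)).intervalIntegrable _ _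
  · exact (by fun_prop : Continuous fun x : ℝ => cos (((n:ℝ) + k) * x)).intervalIntegrable _ _
  have hp : (0:ℝ) < k := by exact_mod_cast hk
  have hn : (0:ℝ) ≤ n := by positivity
  rw [zal_int_cos ((n:ℝ) + k) (by positivity)
    (by have := sin_nat_mul_pi (n + k); push_cast at this; exact this)]
  split_ifs with h
  · subst h; simp; ring
  · rw [zal_int_cos ((n:ℝ) - k) (sub_ne_zero.2 (by exact_mod_cast h))
      (by have := sin_int_mul_pi (n - k); push_cast at this; exact this)]
    simp

open Real in
lemma zal_key (f : ℂ → ℂ) (a : ℕ → ℝ) (ha1 : a 1 = 1)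
    (hf : ∀ z ∈ Metric.ball (0 : ℂ) 1, HasSum (fun k => (a k : ℂ) * z ^ k) (f z))
    (htr : ∀ z ∈ Metric.ball (0 : ℂ) 1, ((f z).im = 0 ↔ z.im = 0))
    (r : ℝ) (hr0 : 0 < r) (hr1 : r < 1) :
    a 3 * r ^ 3 ≤ 3 * r ∧ a 2 ^ 2 * r ^ 3 ≤ a 3 * r ^ 3 + r := by
  have hsum : Summable (fun n => |a n| * r ^ n) := by
    have h := (hf (r : ℂ) (by simpa [abs_of_pos hr0] using hr1)).summable.norm
    simpa [abs_of_pos hr0] using h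
  set v : ℝ → ℝ := fun θ => ∑' n, a n * r ^ n * sin (n * θ) with hv
  have hbd : ∀ n θ, ‖a n * r ^ n * sin (n * θ)‖ ≤ |a n| * r ^ n := by
    intro n θ
    rw [norm_mul, norm_mul, norm_pow, norm_eq_abs, norm_eq_abs, norm_eq_abs, abs_of_pos hr0]
    exact mul_le_of_le_one_right (by positivity) (abs_sin_le_one _)
  have hvs : ∀ θ, HasSum (fun n => a n * r ^ n * sin (n * θ)) (v θ) := fun θ =>
    (Summable.of_norm_bounded hsum (fun n => hbd n θ)).hasSum
  have hvc : Continuous v := continuous_tsum (fun n => by fun_prop) hsum hbd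
  have hvf : ∀ θ : ℝ, v θ = (f (r * Complex.exp (θ * Complex.I))).im := by
    intro θ
    have h := hf (r * Complex.exp (θ * Complex.I))
      (by simpa [Complex.norm_exp_ofReal_mul_I, abs_of_pos hr0] using hr1)
    have h2 := Complex.hasSum_im h
    refine (hvs θ).unique ?_
    convert h2 using 2 with n
    rw [mul_pow, ← Complex.exp_nat_mul, ← mul_assoc, ← Complex.ofReal_pow, ← Complex.ofReal_mul,
      Complex.im_ofReal_mul]
    congr 1
    rw [← mul_assoc, ← Complex.ofReal_natCast, ← Complex.ofReal_mul, Complex.exp_ofReal_mul_I_im]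
  have hne : ∀ θ ∈ Set.Ioo 0 π, v θ ≠ 0 := by
    intro θ hθ h0
    rw [hvf, htr _ (by simpa [Complex.norm_exp_ofReal_mul_I, abs_of_pos hr0] using hr1),
      Complex.im_ofReal_mul, Complex.exp_ofReal_mul_I_im] at h0
    have := sin_pos_of_mem_Ioo hθ
    have : 0 < r * sin θ := by positivity
    linarith
  have hint : ∀ k : ℕ, 1 ≤ k → ∫ x in (0:ℝ)..π, v x * sin (k * x) = a k * r ^ k * (π / 2) := by
    intro k hk
    have h := intervalIntegral.hasSum_integral_of_dominated_convergence
      (μ := MeasureTheory.volume) (a := 0) (b := π)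
      (F := fun n x => a n * r ^ n * sin (n * x) * sin (k * x))
      (f := fun x => v x * sin (k * x))
      (fun n _ => |a n| * r ^ n)
      (fun n => (by fun_prop : Continuous fun x : ℝ =>
        a n * r ^ n * sin (n * x) * sin (k * x)).aestronglyMeasurable)
      (fun n => Filter.Eventually.of_forall fun x _ => by
        rw [norm_mul]
        exact (mul_le_of_le_one_right (norm_nonneg _) (abs_sin_le_one _)).trans (hbd n x))
      (Filter.Eventually.of_forall fun x _ => hsum)
      (by simp)
      (Filter.Eventually.of_forall fun x _ => (hvs x).mul_right _)
    refine h.unique ?_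
    have h3 : ∀ n : ℕ, ∫ x in (0:ℝ)..π, a n * r ^ n * sin (n * x) * sin (k * x)
        = if n = k then a k * r ^ k * (π / 2) else 0 := by
      intro n
      simp_rw [mul_assoc (a n * r ^ n)]
      rw [intervalIntegral.integral_const_mul, zal_orth n k hk]
      split_ifs with h
      · rw [h]
      · simp
    simp_rw [h3]
    exact hasSum_ite_eq k _
  have i1 := hint 1 le_rfl
  have i2 := hint 2 (by norm_num)
  have i3 := hint 3 (by norm_num)
  simp only [Nat.cast_one, one_mul, pow_one, ha1, Nat.cast_ofNat] at i1 i2 i3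
  have hpos : ∀ θ ∈ Set.Icc 0 π, 0 ≤ v θ * sin θ := by
    have hcase : (∀ θ ∈ Set.Ioo 0 π, 0 < v θ) ∨ (∀ θ ∈ Set.Ioo 0 π, v θ < 0) := by
      by_contra! hcon
      obtain ⟨⟨x, hx, hx0⟩, y, hy, hy0⟩ := hcon
      obtain ⟨c, hc, hc0⟩ := isPreconnected_Ioo.intermediate_value hx hy hvc.continuousOn
        (Set.mem_Icc.2 ⟨hx0, hy0⟩)
      exact hne c hc hc0
    have hs : ∀ θ ∈ Set.Icc 0 π, θ ∈ Set.Ioo 0 π ∨ sin θ = 0 := by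
      intro θ hθ
      rcases eq_or_lt_of_le hθ.1 with h | h
      · right; rw [← h]; simp
      rcases eq_or_lt_of_le hθ.2 with h' | h'
      · right; rw [h']; simp
      exact Or.inl ⟨h, h'⟩
    rcases hcase with hc | hc
    · intro θ hθ
      rcases hs θ hθ with h | h
      · exact mul_nonneg (hc θ h).le (sin_pos_of_mem_Ioo h).le
      · simp [h]
    · exfalso
      have : 0 ≤ ∫ x in (0:ℝ)..π, -(v x * sin x) := by
        apply intervalIntegral.integral_nonneg pi_pos.le
        intro θ hθ
        rcases hs θ hθ with h | h
        · have := mul_pos_of_neg_of_neg (hc θ h) (neg_neg_of_pos (sin_pos_of_mem_Ioo h))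
          linarith
        · simp [h]
      rw [intervalIntegral.integral_neg, i1] at this
      have := mul_pos hr0 pi_pos
      linarith
  have hgen : ∀ p q s : ℝ, (∀ θ : ℝ, 0 ≤ p + q * (2 * cos θ) + s * (4 * cos θ ^ 2 - 1)) →
      0 ≤ p * r + q * (a 2 * r ^ 2) + s * (a 3 * r ^ 3) := by
    intro p q s hpq
    have h0 : 0 ≤ ∫ x in (0:ℝ)..π,
        (p * (v x * sin x) + q * (v x * sin (2 * x)) + s * (v x * sin (3 * x))) := by
      apply intervalIntegral.integral_nonneg pi_pos.le
      intro θ hθ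
      have := mul_nonneg (hpos θ hθ) (hpq θ)
      rw [sin_two_mul, sin_three_mul]
      have e : sin θ ^ 3 = sin θ * (1 - cos θ ^ 2) := by rw [← sin_sq]; ring
      rw [e]
      linarith
    rw [intervalIntegral.integral_add, intervalIntegral.integral_add,
      intervalIntegral.integral_const_mul, intervalIntegral.integral_const_mul,
      intervalIntegral.integral_const_mul, i1, i2, i3] at h0
    · have : 0 ≤ (p * r + q * (a 2 * r ^ 2) + s * (a 3 * r ^ 3)) * (π / 2) := by linarith
      exact nonneg_of_mul_nonneg_left this (by positivity)
    all_goals exact Continuous.intervalIntegrable (by fun_prop) _ _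
  constructor
  · have := hgen 3 0 (-1) (fun θ => by nlinarith [sin_sq_add_cos_sq θ, sq_nonneg (sin θ)])
    linarith
  · have := hgen (1 + (a 2 * r) ^ 2) (-2 * (a 2 * r)) 1
      (fun θ => by nlinarith [sq_nonneg (2 * cos θ - a 2 * r)])
    nlinarith

theorem zalcman_typically_real_a2_a3
    (f : ℂ → ℂ) (a : ℕ → ℝ)
    (ha0 : a 0 = 0) (ha1 : a 1 = 1)
    (hf : ∀ z ∈ Metric.ball (0 : ℂ) 1, HasSum (fun k => (a k : ℂ) * z ^ k) (f z))
    (htr : ∀ z ∈ Metric.ball (0 : ℂ) 1, ((f z).im = 0 ↔ z.im = 0))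
    (lam : ℝ) (hlam : 1 ≤ lam) :
    (1 ≤ lam ∧ lam ≤ 3 / 2 → |lam * a 2 ^ 2 - a 3| ≤ 3) ∧
    (3 / 2 ≤ lam → |lam * a 2 ^ 2 - a 3| ≤ 4 * lam - 3) := by
  have hk := zal_key f a ha1 hf htr
  have hev : ∀ᶠ r : ℝ in nhdsWithin 1 (Set.Iio 1), r ∈ Set.Ioo (0:ℝ) 1 :=
    Ioo_mem_nhdsLT one_pos
  have lim : ∀ g : ℝ → ℝ, Continuous g →
      Filter.Tendsto g (nhdsWithin 1 (Set.Iio 1)) (nhds (g 1)) :=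
    fun g hg => hg.continuousAt.tendsto.mono_left nhdsWithin_le_nhds
  have h1 : a 3 * 1 ^ 3 ≤ 3 * 1 :=
    le_of_tendsto_of_tendsto (lim (fun r => a 3 * r ^ 3) (by fun_prop))
      (lim (fun r => 3 * r) (by fun_prop)) (hev.mono fun r hr => (hk r hr.1 hr.2).1)
  have h2 : a 2 ^ 2 * 1 ^ 3 ≤ a 3 * 1 ^ 3 + 1 :=
    le_of_tendsto_of_tendsto (lim (fun r => a 2 ^ 2 * r ^ 3) (by fun_prop))
      (lim (fun r => a 3 * r ^ 3 + r) (by fun_prop)) (hev.mono fun r hr => (hk r hr.1 hr.2).2)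
  have h3 : lam * a 2 ^ 2 - a 3 ≤ 4 * lam - 3 := by
    nlinarith [mul_nonneg (sub_nonneg.2 hlam) (by linarith : 0 ≤ 4 - a 2 ^ 2)]
  have h4 : -3 ≤ lam * a 2 ^ 2 - a 3 := by
    have : 0 ≤ lam * a 2 ^ 2 := by positivity
    linarith
  constructor
  · rintro ⟨_, h⟩
    exact abs_le.2 ⟨by linarith, by linarith⟩
  · intro h
    exact abs_le.2 ⟨by linarith, by linarith⟩
end

section
/- Fix a real number β < 1 and for n ≥ 2 set B_n = (1 + 2(n−1)(1−β))/n. Let f(z) = z + Σ_{n≥2} a_n zⁿ be analytic on the open unit disc 𝔻 with Re((1−z)f′(z)) > β for all z ∈ 𝔻. Then for all integers n, m ≥ 2 and every real μ with μ ≥ max{nm/((n+m−1)(1−β)), nm/(n+m−1)}, one has |μ a_n a_m − a_{n+m−1}| ≤ μ B_n B_m − B_{n+m−1}. -/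
lemma zal_hasSum_congr {u v : ℕ → ℂ} {x : ℂ} (h : ∀ k, u k = v k) :
    HasSum u x ↔ HasSum v x := by
  rw [funext h]

open Complex in
lemma zal_int_exp (l : ℤ) :
    ∫ θ in (0:ℝ)..(2 * Real.pi), Complex.exp ((l : ℂ) * I * (θ : ℂ))
      = if l = 0 then 2 * (Real.pi : ℂ) else 0 := by
  split_ifs with h
  · subst h; simp
  · rw [integral_exp_mul_complex]
    · have : Complex.exp ((l : ℂ) * I * ((2 * Real.pi : ℝ) : ℂ)) = 1 := by
        rw [Complex.exp_eq_one_iff]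
        exact ⟨l, by push_cast; ring⟩
      rw [this]; simp
    · simp [h]

open Complex in
lemma zal_int_series (c : ℕ → ℂ) (hc : Summable fun k => ‖c k‖) (g : ℝ → ℂ)
    (hg : ∀ θ : ℝ, HasSum (fun k => c k * Complex.exp ((k : ℂ) * I * (θ : ℂ))) (g θ)) (l : ℤ) :
    HasSum (fun k : ℕ => c k * (if (k : ℤ) + l = 0 then 2 * (Real.pi : ℂ) else 0))
      (∫ θ in (0:ℝ)..(2 * Real.pi), g θ * Complex.exp ((l : ℂ) * I * (θ : ℂ))) := by
  have key := intervalIntegral.hasSum_integral_of_dominated_convergence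
    (μ := MeasureTheory.volume) (a := 0) (b := 2 * Real.pi)
    (F := fun (k : ℕ) (θ : ℝ) => c k * Complex.exp ((((k : ℤ) + l : ℤ) : ℂ) * I * (θ : ℂ)))
    (f := fun θ => g θ * Complex.exp ((l : ℂ) * I * (θ : ℂ)))
    (fun k _ => ‖c k‖) ?_ ?_ ?_ ?_ ?_
  · simpa only [intervalIntegral.integral_const_mul, zal_int_exp] using key
  · intro k
    exact Continuous.aestronglyMeasurable (by fun_prop)
  · intro k
    refine Filter.Eventually.of_forall fun θ _ => ?_
    rw [norm_mul, Complex.norm_exp]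
    simp
  · exact Filter.Eventually.of_forall fun θ _ => hc
  · simp
  · refine Filter.Eventually.of_forall fun θ _ => ?_
    refine (zal_hasSum_congr fun k => ?_).mpr
      ((hg θ).mul_right (Complex.exp ((l : ℂ) * I * (θ : ℂ))))
    rw [mul_assoc (c k), ← Complex.exp_add]
    congr 2
    push_cast; ring

open Complex in
lemma zal_moment (c : ℕ → ℂ) (hc : Summable fun k => ‖c k‖) (g : ℝ → ℂ) (hgc : Continuous g)
    (hg : ∀ θ : ℝ, HasSum (fun k => c k * Complex.exp ((k : ℂ) * I * (θ : ℂ))) (g θ)) (k : ℕ) :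
    ∫ θ in (0:ℝ)..(2 * Real.pi), ((g θ).re : ℂ) * Complex.exp (((-k : ℤ) : ℂ) * I * (θ : ℂ))
      = Real.pi * (c k + if k = 0 then (starRingEnd ℂ) (c 0) else 0) := by
  have h1 : ∀ l : ℕ, ∫ θ in (0:ℝ)..(2 * Real.pi), g θ * Complex.exp (((-l : ℤ) : ℂ) * I * (θ : ℂ))
      = c l * (2 * Real.pi) := by
    intro l
    refine (zal_int_series c hc g hg (-l)).unique ?_
    convert hasSum_single l ?_ using 1
    · simp
    · intro b hb
      have : (b : ℤ) + -(l : ℤ) ≠ 0 := by omega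
      rw [if_neg this, mul_zero]
  have h2 : ∀ l : ℕ, ∫ θ in (0:ℝ)..(2 * Real.pi), g θ * Complex.exp (((l : ℤ) : ℂ) * I * (θ : ℂ))
      = if l = 0 then c 0 * (2 * Real.pi) else 0 := by
    intro l
    refine (zal_int_series c hc g hg l).unique ?_
    convert hasSum_single 0 ?_ using 1
    · simp
    · intro b hb
      have : (b : ℤ) + (l : ℤ) ≠ 0 := by omega
      rw [if_neg this, mul_zero]
  have h3 : ∫ θ in (0:ℝ)..(2 * Real.pi),
        (starRingEnd ℂ) (g θ * Complex.exp (((k : ℤ) : ℂ) * I * (θ : ℂ)))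
      = (starRingEnd ℂ) (if k = 0 then c 0 * (2 * Real.pi) else 0) := by
    rw [← h2 k]
    simp only [intervalIntegral, integral_conj, map_sub]
  have h4 : ∀ θ : ℝ, ((g θ).re : ℂ) * Complex.exp (((-k : ℤ) : ℂ) * I * (θ : ℂ))
      = (1 / 2 : ℂ) * (g θ * Complex.exp (((-k : ℤ) : ℂ) * I * (θ : ℂ))
        + (starRingEnd ℂ) (g θ * Complex.exp (((k : ℤ) : ℂ) * I * (θ : ℂ)))) := by
    intro θ
    have : (starRingEnd ℂ) (Complex.exp (((k : ℤ) : ℂ) * I * (θ : ℂ)))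
        = Complex.exp (((-k : ℤ) : ℂ) * I * (θ : ℂ)) := by
      rw [← Complex.exp_conj]; congr 1; simp
    rw [map_mul, this, Complex.re_eq_add_conj]
    ring
  simp_rw [h4]
  rw [intervalIntegral.integral_const_mul, intervalIntegral.integral_add, h1, h3]
  · split_ifs with hk
    · subst hk; simp only [map_mul, conj_ofReal, map_ofNat]; ring
    · simp; ring
  · exact Continuous.intervalIntegrable (by fun_prop) _ _
  · refine Continuous.intervalIntegrable ?_ _ _
    exact Complex.continuous_conj.comp (by fun_prop)

open Complex in
lemma zal_circle (c : ℕ → ℂ) (hc : Summable fun k => ‖c k‖) (hc0 : c 0 = 1) (g : ℝ → ℂ)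
    (hg : ∀ θ : ℝ, HasSum (fun k => c k * Complex.exp ((k : ℂ) * I * (θ : ℂ))) (g θ))
    (hpos : ∀ θ, 0 ≤ (g θ).re) (i k : ℕ) (hi : 1 ≤ i) (hk : 1 ≤ k) :
    ‖c k‖ ≤ 2 ∧ ‖c (i + k) - c i * c k‖ ≤ 2 := by
  have hpi := Real.pi_pos
  have hgc : Continuous g := by
    have : g = fun θ : ℝ => ∑' k : ℕ, c k * Complex.exp ((k : ℂ) * I * (θ : ℂ)) := by
      ext θ; exact (hg θ).tsum_eq.symm
    rw [this]
    refine continuous_tsum (fun k => by fun_prop) hc ?_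
    intro k θ
    rw [norm_mul, Complex.norm_exp]; simp
  set E : ℕ → ℝ → ℂ := fun k θ => Complex.exp (((-k : ℤ) : ℂ) * I * (θ : ℂ)) with hE
  have hEc : ∀ k, Continuous (E k) := fun k => by simp only [hE]; fun_prop
  have hEn : ∀ k θ, ‖E k θ‖ = 1 := by
    intro k θ; simp only [hE, Complex.norm_exp]; simp
  have hEm : ∀ i k θ, E (i + k) θ = E i θ * E k θ := by
    intro i k θ; simp only [hE, ← Complex.exp_add]; congr 1; push_cast; ring
  have hwc : Continuous fun θ => (g θ).re := Complex.continuous_re.comp hgc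
  have hwcc : Continuous fun θ => ((g θ).re : ℂ) := Complex.continuous_ofReal.comp hwc
  have hM : ∀ k : ℕ, 1 ≤ k → ∫ θ in (0:ℝ)..(2 * Real.pi), ((g θ).re : ℂ) * E k θ
      = Real.pi * c k := by
    intro k hk
    rw [zal_moment c hc g hgc hg k, if_neg (by omega), add_zero]
  have hM0 : ∫ θ in (0:ℝ)..(2 * Real.pi), (g θ).re = 2 * Real.pi := by
    have := zal_moment c hc g hgc hg 0
    simp only [hc0] at this
    simp at this
    apply Complex.ofReal_injective
    rw [← intervalIntegral.integral_ofReal, this]; push_cast; ring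
  have hle : (0:ℝ) ≤ 2 * Real.pi := by positivity
  constructor
  · have := intervalIntegral.norm_integral_le_of_norm_le (μ := MeasureTheory.volume) hle
      (f := fun θ => ((g θ).re : ℂ) * E k θ) (g := fun θ => (g θ).re)
      (Filter.Eventually.of_forall fun θ _ => by
        rw [norm_mul, hEn, mul_one, Complex.norm_real, Real.norm_of_nonneg (hpos θ)])
      (hwc.intervalIntegrable _ _)
    rw [hM k hk, hM0, norm_mul, Complex.norm_real, Real.norm_of_nonneg hpi.le] at this
    nlinarith
  · have hI : ∫ θ in (0:ℝ)..(2 * Real.pi), (((g θ).re : ℂ) * E (i + k) θ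
          - c k * (((g θ).re : ℂ) * E i θ)) = Real.pi * (c (i + k) - c i * c k) := by
      rw [intervalIntegral.integral_sub, intervalIntegral.integral_const_mul, hM _ hi,
        hM _ (by omega)]
      · ring
      · exact (hwcc.mul (hEc _)).intervalIntegrable _ _
      · exact (continuous_const.mul (hwcc.mul (hEc _))).intervalIntegrable _ _
    have hR : ∫ θ in (0:ℝ)..(2 * Real.pi), ((g θ).re * (1 + ‖c k‖ ^ 2 / 2)
          - ((starRingEnd ℂ) (c k) * (((g θ).re : ℂ) * E k θ)).re) = 2 * Real.pi := by
      rw [intervalIntegral.integral_sub, intervalIntegral.integral_mul_const, hM0]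
      · have h := Complex.reCLM.intervalIntegral_comp_comm (μ := MeasureTheory.volume)
          (a := 0) (b := 2 * Real.pi)
          (f := fun θ => (starRingEnd ℂ) (c k) * (((g θ).re : ℂ) * E k θ))
          ((continuous_const.mul (hwcc.mul (hEc _))).intervalIntegrable _ _)
        simp only [Complex.reCLM_apply] at h
        rw [h, intervalIntegral.integral_const_mul, hM k hk]
        have : (starRingEnd ℂ) (c k) * (Real.pi * c k) = ((Real.pi * ‖c k‖ ^ 2 : ℝ) : ℂ) := by
          push_cast
          rw [← Complex.conj_mul']; ring
        rw [this, Complex.ofReal_re]; ring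
      · exact (hwc.mul continuous_const).intervalIntegrable _ _
      · exact (Complex.continuous_re.comp
          (continuous_const.mul (hwcc.mul (hEc _)))).intervalIntegrable _ _
    have := intervalIntegral.norm_integral_le_of_norm_le (μ := MeasureTheory.volume) hle
      (f := fun θ => ((g θ).re : ℂ) * E (i + k) θ - c k * (((g θ).re : ℂ) * E i θ))
      (g := fun θ => ((g θ).re * (1 + ‖c k‖ ^ 2 / 2)
          - ((starRingEnd ℂ) (c k) * (((g θ).re : ℂ) * E k θ)).re))
      (Filter.Eventually.of_forall fun θ _ => by
        have e1 : ((g θ).re : ℂ) * E (i + k) θ - c k * (((g θ).re : ℂ) * E i θ)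
            = ((g θ).re : ℂ) * (E i θ * (E k θ - c k)) := by rw [hEm]; ring
        have e2 : ‖E k θ - c k‖ ^ 2
            = 1 + ‖c k‖ ^ 2 - 2 * ((starRingEnd ℂ) (c k) * E k θ).re := by
          have h1 : ‖E k θ‖ ^ 2 = 1 := by rw [hEn]; norm_num
          rw [Complex.sq_norm, Complex.normSq_apply] at h1 ⊢
          rw [Complex.sq_norm, Complex.normSq_apply]
          simp only [Complex.sub_re, Complex.sub_im, Complex.mul_re, Complex.conj_re,
            Complex.conj_im]
          linear_combination h1
        have e3 : ((starRingEnd ℂ) (c k) * (((g θ).re : ℂ) * E k θ)).re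
            = (g θ).re * ((starRingEnd ℂ) (c k) * E k θ).re := by
          rw [mul_left_comm, Complex.re_ofReal_mul]
        rw [e1, e3, norm_mul, norm_mul, hEn, one_mul, Complex.norm_real,
          Real.norm_of_nonneg (hpos θ), ← mul_sub]
        apply mul_le_mul_of_nonneg_left _ (hpos θ)
        nlinarith [sq_nonneg (‖E k θ - c k‖ - 1)])
      (Continuous.intervalIntegrable ((hwc.mul continuous_const).sub (Complex.continuous_re.comp
          (continuous_const.mul (hwcc.mul (hEc _))))) _ _)
    rw [hI, hR, norm_mul, Complex.norm_real, Real.norm_of_nonneg hpi.le] at this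
    nlinarith

lemma zal_carath (c : ℕ → ℂ) (hc0 : c 0 = 1) (p : ℂ → ℂ)
    (hp : ∀ z ∈ Metric.ball (0 : ℂ) 1, HasSum (fun k => c k * z ^ k) (p z))
    (hpos : ∀ z ∈ Metric.ball (0 : ℂ) 1, 0 ≤ (p z).re) (i k : ℕ) (hi : 1 ≤ i) (hk : 1 ≤ k) :
    ‖c k‖ ≤ 2 ∧ ‖c (i + k) - c i * c k‖ ≤ 2 := by
  have key : ∀ r ∈ Set.Ioo (0:ℝ) 1, ‖c k * (r:ℂ) ^ k‖ ≤ 2 ∧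
      ‖c (i + k) * (r:ℂ) ^ (i + k) - (c i * (r:ℂ) ^ i) * (c k * (r:ℂ) ^ k)‖ ≤ 2 := by
    intro r hr
    have hm : ∀ θ : ℝ, (r : ℂ) * Complex.exp (Complex.I * θ) ∈ Metric.ball (0:ℂ) 1 := by
      intro θ
      rw [mem_ball_zero_iff, norm_mul, Complex.norm_exp, Complex.norm_real,
        Real.norm_of_nonneg hr.1.le]
      simpa using hr.2
    refine zal_circle (fun k => c k * (r:ℂ) ^ k) ?_ (by simp [hc0])
      (fun θ => p (r * Complex.exp (Complex.I * θ))) ?_ (fun θ => hpos _ (hm θ)) i k hi hk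
    · have : (r : ℂ) ∈ Metric.ball (0:ℂ) 1 := by simpa using hm 0
      exact (hp _ this).summable.norm
    · intro θ
      refine (zal_hasSum_congr fun j => ?_).mpr (hp _ (hm θ))
      rw [mul_pow, ← Complex.exp_nat_mul]
      ring_nf
  have hmem : Set.Ioo (0:ℝ) 1 ∈ nhdsWithin (1:ℝ) (Set.Iio 1) := Ioo_mem_nhdsLT (by norm_num)
  have ht : Filter.Tendsto (fun r : ℝ => (r:ℂ)) (nhdsWithin (1:ℝ) (Set.Iio 1)) (nhds 1) := by
    have : Filter.Tendsto (fun r : ℝ => (r:ℂ)) (nhds 1) (nhds ((1:ℝ):ℂ)) :=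
      Complex.continuous_ofReal.tendsto 1
    simpa using this.mono_left nhdsWithin_le_nhds
  constructor
  · have h := ((ht.pow k).const_mul (c k)).norm
    rw [one_pow, mul_one] at h
    exact le_of_tendsto h (Filter.mem_of_superset hmem fun r hr => (key r hr).1)
  · have h := (((ht.pow (i + k)).const_mul (c (i + k))).sub
      (((ht.pow i).const_mul (c i)).mul ((ht.pow k).const_mul (c k)))).norm
    simp only [one_pow, mul_one] at h
    exact le_of_tendsto h (Filter.mem_of_superset hmem fun r hr => (key r hr).2)

lemma zal_deriv (f : ℂ → ℂ) (a : ℕ → ℂ)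
    (hf : ∀ z ∈ Metric.ball (0 : ℂ) 1, HasSum (fun k => a k * z ^ k) (f z)) 
    (z : ℂ) (hz : z ∈ Metric.ball (0 : ℂ) 1) :
    HasSum (fun k : ℕ => (((k : ℂ) + 1) * a (k + 1) - k * a k) * z ^ k) ((1 - z) * deriv f z) := by
  have hz1 : ‖z‖ < 1 := by simpa using hz
  obtain ⟨r, hr1, hr2⟩ := exists_between hz1
  have hr0 : 0 ≤ r := (norm_nonneg z).trans hr1.le
  have hrm : (r : ℂ) ∈ Metric.ball (0 : ℂ) 1 := by
    simpa [abs_of_nonneg hr0] using hr2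
  have h1 := Complex.hasSum_deriv_of_summable_norm (U := Metric.ball (0:ℂ) r)
    (F := fun k w => a k * w ^ k) (z := z) (hf _ hrm).summable.norm
    (fun k => by fun_prop) Metric.isOpen_ball
    (fun k w hw => by
      have : ‖w‖ < r := by simpa using hw
      rw [norm_mul, norm_mul, norm_pow, norm_pow, Complex.norm_real, Real.norm_of_nonneg hr0]
      gcongr) (by simpa using hr1)
  have h2 : deriv (fun w => ∑' k, a k * w ^ k) z = deriv f z := by
    apply Filter.EventuallyEq.deriv_eq
    filter_upwards [Metric.isOpen_ball.mem_nhds hz] with w hw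
    exact (hf w hw).tsum_eq
  rw [h2] at h1
  have h3 : HasSum (fun k : ℕ => a k * (k * z ^ (k - 1))) (deriv f z) := by
    refine (zal_hasSum_congr fun k => ?_).mpr h1
    simp
  have h4 : HasSum (fun k : ℕ => a (k + 1) * (((k : ℂ) + 1) * z ^ k)) (deriv f z) := by
    have := (hasSum_nat_add_iff' 1).mpr h3
    simpa using this
  have h5 := h4.sub (h3.mul_left z)
  rw [show (1 - z) * deriv f z = deriv f z - z * deriv f z by ring]
  refine (zal_hasSum_congr fun k => ?_).mpr h5
  rcases k with _ | k
  · simp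
  · simp only [Nat.add_sub_cancel]; push_cast; ring

theorem zalcman_F1_beta
    (β : ℝ) (hβ : β < 1) (B : ℕ → ℝ)
    (hB : ∀ n, 2 ≤ n → B n = (1 + 2 * ((n : ℝ) - 1) * (1 - β)) / n)
    (f : ℂ → ℂ) (a : ℕ → ℂ)
    (ha0 : a 0 = 0) (ha1 : a 1 = 1)
    (hf : ∀ z ∈ Metric.ball (0 : ℂ) 1, HasSum (fun k => a k * z ^ k) (f z))
    (hre : ∀ z ∈ Metric.ball (0 : ℂ) 1, β < ((1 - z) * deriv f z).re)
    (n m : ℕ) (hn : 2 ≤ n) (hm : 2 ≤ m) (μ : ℝ)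
    (hμ : max ((n : ℝ) * m / (((n : ℝ) + m - 1) * (1 - β)))
            ((n : ℝ) * m / ((n : ℝ) + m - 1)) ≤ μ) :
    ‖(μ : ℂ) * a n * a m - a (n + m - 1)‖ ≤ μ * B n * B m - B (n + m - 1) := by
  obtain ⟨γ, hγ⟩ : ∃ γ : ℝ, γ = 1 - β := ⟨_, rfl⟩
  have hγ0 : 0 < γ := by linarith
  have hγc : (γ : ℂ) ≠ 0 := by exact_mod_cast hγ0.ne'
  have hβγ : (β : ℂ) = 1 - γ := by rw [hγ]; push_cast; ring
  -- Carathéodory coefficients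
  set c : ℕ → ℂ := fun k => if k = 0 then 1 else (((k : ℂ) + 1) * a (k + 1) - k * a k) / γ with hc
  have hc0 : c 0 = 1 := by simp [hc]
  have hcar := zal_carath c hc0 (fun z => ((1 - z) * deriv f z - β) / γ)
    (by
      intro z hz
      have h1 := ((zal_deriv f a hf z hz).sub (hasSum_ite_eq 0 (β : ℂ))).div_const (γ : ℂ)
      refine (zal_hasSum_congr fun k => ?_).mpr h1
      by_cases hk : k = 0
      · subst hk; simp [hc, ha1, hβγ, hγc]
      · simp only [hc, if_neg hk]; ring)
    (by
      intro z hz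
      rw [Complex.div_ofReal_re]
      refine div_nonneg ?_ hγ0.le
      have := hre z hz
      rw [Complex.sub_re, Complex.ofReal_re]
      linarith)
  have hα : ∀ j : ℕ, ((j : ℂ) + 1) * a (j + 1)
      = 1 + γ * ∑ k ∈ Finset.range j, c (k + 1) := by
    intro j
    induction j with
    | zero => simp [ha1]
    | succ j ih =>
      rw [Finset.sum_range_succ, mul_add, ← add_assoc, ← ih]
      simp only [hc, if_neg (Nat.succ_ne_zero j)]
      push_cast
      field_simp
      ring
  obtain ⟨i, rfl⟩ : ∃ i, n = i + 1 := ⟨n - 1, by omega⟩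
  obtain ⟨j, rfl⟩ : ∃ j, m = j + 1 := ⟨m - 1, by omega⟩
  have hi : 1 ≤ i := by omega
  have hj : 1 ≤ j := by omega
  have hN : i + 1 + (j + 1) - 1 = i + j + 1 := by omega
  rw [hN, hB _ hn, hB _ hm, hB (i + j + 1) (by omega), ← hγ]
  rw [← hγ] at hμ
  push_cast at hμ ⊢
  have hni : (0:ℝ) < (i:ℝ) + 1 := by positivity
  have hnj : (0:ℝ) < (j:ℝ) + 1 := by positivity
  have hnN : (0:ℝ) < (i:ℝ) + j + 1 := by positivity
  obtain ⟨lam, hlam⟩ : ∃ l : ℝ, l = μ * (i + j + 1) / ((i + 1) * (j + 1)) := ⟨_, rfl⟩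
  have hmu : μ = lam * ((i + 1) * (j + 1)) / (i + j + 1) := by rw [hlam]; field_simp
  have hl1 : 1 ≤ lam := by
    have := (le_max_right _ _).trans hμ
    rw [div_le_iff₀ (by linarith)] at this
    rw [hlam, le_div_iff₀ (by positivity)]
    linarith
  have hl2 : 1 ≤ lam * γ := by
    have := (le_max_left _ _).trans hμ
    rw [div_le_iff₀ (mul_pos (by linarith) hγ0)] at this
    rw [hlam, div_mul_eq_mul_div, le_div_iff₀ (by positivity)]
    linarith
  set S : ℕ → ℂ := fun j => ∑ k ∈ Finset.range j, c (k + 1) with hS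
  have hcn : ∀ k, ‖c (k + 1)‖ ≤ 2 := fun k => (hcar 1 (k + 1) le_rfl (by omega)).1
  have hSn : ∀ j : ℕ, ‖S j‖ ≤ 2 * j := by
    intro j
    refine (norm_sum_le _ _).trans ((Finset.sum_le_sum fun k _ => hcn k).trans ?_)
    simp [mul_comm]
  have hT : ‖∑ k ∈ Finset.range j, (((lam * γ : ℝ) : ℂ) * (c i * c (k + 1)) - c (i + (k + 1)))‖
      ≤ (4 * (lam * γ) - 2) * j := by
    refine (norm_sum_le _ _).trans ((Finset.sum_le_sum (g := fun _ => 4 * (lam * γ) - 2)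
      fun k _ => ?_).trans ?_)
    · have h1 := (hcar i (k + 1) hi (by omega)).2
      have h2 : ‖c i‖ ≤ 2 := (hcar 1 i le_rfl hi).1
      have h3 := hcn k
      have h4 : ‖c i * c (k + 1)‖ ≤ 4 := by
        rw [norm_mul]; nlinarith [norm_nonneg (c i), norm_nonneg (c (k + 1))]
      have : ((lam * γ : ℝ) : ℂ) * (c i * c (k + 1)) - c (i + (k + 1))
          = ((lam * γ - 1 : ℝ) : ℂ) * (c i * c (k + 1))
            - (c (i + (k + 1)) - c i * c (k + 1)) := by push_cast; ring
      rw [this]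
      refine (norm_sub_le _ _).trans ?_
      rw [norm_mul, Complex.norm_real, Real.norm_of_nonneg (by linarith)]
      nlinarith
    · rw [Finset.sum_const, Finset.card_range, nsmul_eq_mul, mul_comm]
  obtain ⟨s, hs⟩ : ∃ s, i = s + 1 := ⟨i - 1, by omega⟩
  have hSi : S i = S s + c i := by
    simp only [hS]; rw [hs, Finset.sum_range_succ]
  have hSij : S (i + j) = S i + ∑ k ∈ Finset.range j, c (i + (k + 1)) := by
    simp only [hS]; rw [Finset.sum_range_add]; rfl
  have hid : ((i:ℂ) + j + 1) * ((μ : ℂ) * a (i + 1) * a (j + 1) - a (i + j + 1))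
      = ((lam - 1 : ℝ) : ℂ) + ((γ * (lam - 1) : ℝ) : ℂ) * S i + ((lam * γ : ℝ) : ℂ) * S j
        + ((lam * γ ^ 2 : ℝ) : ℂ) * (S s * S j)
        + (γ : ℂ) * ∑ k ∈ Finset.range j,
            (((lam * γ : ℝ) : ℂ) * (c i * c (k + 1)) - c (i + (k + 1))) := by
    have e1 := hα i
    have e2 := hα j
    have e3 := hα (i + j)
    push_cast at e3
    have e4 : ((i:ℂ) + j + 1) * (μ : ℂ) = lam * ((i + 1) * (j + 1)) := by
      have : ((i:ℝ) + j + 1) * μ = lam * ((i + 1) * (j + 1)) := by rw [hmu]; field_simp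
      exact_mod_cast this
    change _ = 1 + γ * S i at e1
    change _ = 1 + γ * S j at e2
    change _ = 1 + γ * S (i + j) at e3
    have e5 : ∑ k ∈ Finset.range j, (((lam * γ : ℝ) : ℂ) * (c i * c (k + 1)) - c (i + (k + 1)))
        = ((lam * γ : ℝ) : ℂ) * (c i * S j) - (S (i + j) - S i) := by
      rw [Finset.sum_sub_distrib, ← Finset.mul_sum, ← Finset.mul_sum, hSij]; ring
    rw [e5]
    calc _ = lam * ((((i:ℂ) + 1) * a (i + 1)) * (((j:ℂ) + 1) * a (j + 1)))
          - ((i:ℂ) + j + 1) * a (i + j + 1) := by linear_combination (a (i+1) * a (j+1)) * e4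
      _ = _ := by
        rw [e1, e2, e3, show S s = S i - c i by rw [hSi]; ring]
        push_cast; ring
  have hsi : (s : ℝ) = i - 1 := by rw [hs]; push_cast; ring
  have hSS : ‖S s * S j‖ ≤ (2 * (i - 1)) * (2 * j) := by
    rw [norm_mul, ← hsi]
    exact mul_le_mul (hSn s) (hSn j) (norm_nonneg _) (by positivity)
  have hbound : ‖((i:ℂ) + j + 1) * ((μ : ℂ) * a (i + 1) * a (j + 1) - a (i + j + 1))‖
      ≤ (lam - 1) + (γ * (lam - 1)) * (2 * i) + (lam * γ) * (2 * j)
        + (lam * γ ^ 2) * ((2 * (i - 1)) * (2 * j)) + γ * ((4 * (lam * γ) - 2) * j) := by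
    have hnr : ∀ (x : ℝ) (w : ℂ) (b : ℝ), 0 ≤ x → ‖w‖ ≤ b → ‖(x : ℂ) * w‖ ≤ x * b := by
      intro x w b hx hw
      rw [norm_mul, Complex.norm_real, Real.norm_of_nonneg hx]
      exact mul_le_mul_of_nonneg_left hw hx
    rw [hid]
    refine norm_add_le_of_le (norm_add_le_of_le (norm_add_le_of_le (norm_add_le_of_le ?_ ?_) ?_)
      ?_) ?_
    · rw [Complex.norm_real, Real.norm_of_nonneg (by linarith)]
    · exact hnr _ _ _ (mul_nonneg hγ0.le (by linarith)) (hSn i)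
    · exact hnr _ _ _ (by positivity) (hSn j)
    · exact hnr _ _ _ (by positivity) hSS
    · exact hnr _ _ _ hγ0.le hT
  have hnorm : ‖(i:ℂ) + j + 1‖ = (i:ℝ) + j + 1 := by
    have : (i:ℂ) + j + 1 = (((i:ℝ) + j + 1 : ℝ) : ℂ) := by push_cast; ring
    rw [this, Complex.norm_real, Real.norm_of_nonneg hnN.le]
  rw [norm_mul, hnorm] at hbound
  refine le_of_mul_le_mul_left (hbound.trans (le_of_eq ?_)) hnN
  rw [hmu]
  field_simp
  ring
end
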